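/- Let f be a nonzero binary octavic over an algebraically closed field k with char k ∉ {2,3,5,7}. Then f has a root of multiplicity at least 5 if and only if J_i(f) = 0 for all i = 2,...,8. -/

import Mathlib

noncomputable section

open MvPolynomial


variable {k : Type*} [Field k]

/-- char k not in {2,3,5,7} -/
def CharOK (k : Type*) [Field k] : Prop :=
  ringChar k ≠ 2 ∧ ringChar k ≠ 3 ∧ ringChar k ≠ 5 ∧ ringChar k ≠ 7

/-- the r-th transvectant of binary forms f, g of degrees n and m -/
def transvectant (n m r : ℕ) (f g : MvPolynomial (Fin 2) k) : MvPolynomial (Fin 2) k :=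
  C ((((m - r).factorial * (n - r).factorial : ℕ) : k) /
      ((n.factorial * m.factorial : ℕ) : k)) *
    ∑ j ∈ Finset.range (r + 1),
      C ((-1 : k) ^ j * (r.choose j : k)) *
        ((fun p => pderiv (0 : Fin 2) p)^[r - j] ((fun p => pderiv (1 : Fin 2) p)^[j] f)) *
        ((fun p => pderiv (0 : Fin 2) p)^[j] ((fun p => pderiv (1 : Fin 2) p)^[r - j] g))

/-- the binary octavic with coefficient vector a -/
def octForm (a : Fin 9 → k) : MvPolynomial (Fin 2) k :=
  ∑ i : Fin 9, C (a i) * X 0 ^ (i : ℕ) * X 1 ^ (8 - (i : ℕ))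

def covg (a : Fin 9 → k) := transvectant 8 8 4 (octForm a) (octForm a)
def covk (a : Fin 9 → k) := transvectant 8 8 6 (octForm a) (octForm a)
def covh (a : Fin 9 → k) := transvectant 4 4 2 (covk a) (covk a)
def covm (a : Fin 9 → k) := transvectant 8 4 4 (octForm a) (covk a)
def covn (a : Fin 9 → k) := transvectant 8 4 4 (octForm a) (covh a)
def covp (a : Fin 9 → k) := transvectant 8 4 4 (covg a) (covk a)
def covq (a : Fin 9 → k) := transvectant 8 4 4 (covg a) (covh a)

def J2 (a : Fin 9 → k) : k :=
  (2 ^ 2 * 5 * 7 : k) * constantCoeff (transvectant 8 8 8 (octForm a) (octForm a))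
def J3 (a : Fin 9 → k) : k :=
  ((2 ^ 4 * 5 ^ 2 * 7 ^ 3 : k) / 3) * constantCoeff (transvectant 8 8 8 (octForm a) (covg a))
def J4 (a : Fin 9 → k) : k :=
  (2 ^ 9 * 3 * 7 ^ 4 : k) * constantCoeff (transvectant 4 4 4 (covk a) (covk a))
def J5 (a : Fin 9 → k) : k :=
  (2 ^ 9 * 5 * 7 ^ 5 : k) * constantCoeff (transvectant 4 4 4 (covm a) (covk a))
def J6 (a : Fin 9 → k) : k :=
  (2 ^ 14 * 3 ^ 2 * 7 ^ 6 : k) * constantCoeff (transvectant 4 4 4 (covk a) (covh a))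
def J7 (a : Fin 9 → k) : k :=
  (2 ^ 14 * 3 * 5 * 7 ^ 7 : k) * constantCoeff (transvectant 4 4 4 (covm a) (covh a))
def J8 (a : Fin 9 → k) : k :=
  (2 ^ 17 * 3 * 5 ^ 2 * 7 ^ 9 : k) * constantCoeff (transvectant 4 4 4 (covp a) (covh a))
def J9 (a : Fin 9 → k) : k :=
  (2 ^ 19 * 3 ^ 2 * 5 * 7 ^ 9 : k) * constantCoeff (transvectant 4 4 4 (covn a) (covh a))
def J10 (a : Fin 9 → k) : k :=
  (2 ^ 22 * 3 ^ 2 * 5 ^ 2 * 7 ^ 11 : k) * constantCoeff (transvectant 4 4 4 (covq a) (covh a))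

def Jinv : ℕ → (Fin 9 → k) → k
  | 2 => J2
  | 3 => J3
  | 4 => J4
  | 5 => J5
  | 6 => J6
  | 7 => J7
  | 8 => J8
  | 9 => J9
  | 10 => J10
  | _ => fun _ => 0

/-- action of a 2x2 matrix on binary forms by substitution (X,Y) ↦ (aX+bY, cX+dY) -/
def substForm (g : Matrix (Fin 2) (Fin 2) k) (p : MvPolynomial (Fin 2) k) :
    MvPolynomial (Fin 2) k :=
  aeval (fun i : Fin 2 => C (g i 0) * X 0 + C (g i 1) * X 1) p

/-- coefficients of the transformed octavic -/
def octAct (g : Matrix (Fin 2) (Fin 2) k) (a : Fin 9 → k) : Fin 9 → k := fun i =>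
  coeff (Finsupp.single (0 : Fin 2) (i : ℕ) + Finsupp.single (1 : Fin 2) (8 - (i : ℕ)))
    (substForm g (octForm a))

/-! ### covariance -/
open scoped TensorProduct
abbrev PP (k : Type*) [Field k] := MvPolynomial (Fin 2) k

/-- the partial derivatives as linear maps -/
def dA (k : Type*) [Field k] : PP k →ₗ[k] PP k := (pderiv (0 : Fin 2)).toLinearMap
def dB (k : Type*) [Field k] : PP k →ₗ[k] PP k := (pderiv (1 : Fin 2)).toLinearMap

lemma dA_iter (n : ℕ) (f : PP k) : (fun p => pderiv (0 : Fin 2) p)^[n] f = (dA k ^ n) f := by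
  rw [Module.End.pow_apply]; rfl
lemma dB_iter (n : ℕ) (f : PP k) : (fun p => pderiv (1 : Fin 2) p)^[n] f = (dB k ^ n) f := by
  rw [Module.End.pow_apply]; rfl

lemma dAB_comm : Commute (dA k) (dB k) := by
  have h : ⁅(pderiv (0 : Fin 2) : Derivation k (PP k) (PP k)), (pderiv (1 : Fin 2) : Derivation k (PP k) (PP k))⁆ = 0 := by
    refine MvPolynomial.derivation_ext (R := k) ?_
    intro i
    rw [Derivation.commutator_apply]
    fin_cases i <;> simp [pderiv_X]
  refine LinearMap.ext fun p => ?_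
  have h2 : (⁅(pderiv (0 : Fin 2) : Derivation k (PP k) (PP k)), (pderiv (1 : Fin 2) : Derivation k (PP k) (PP k))⁆) p = 0 := by
    rw [h]; rfl
  rw [Derivation.commutator_apply, sub_eq_zero] at h2
  exact h2

/-- Cayley's operator -/
def oA (k : Type*) [Field k] : Module.End k (PP k ⊗[k] PP k) := TensorProduct.map (dA k) (dB k)
def oB (k : Type*) [Field k] : Module.End k (PP k ⊗[k] PP k) := TensorProduct.map (dB k) (dA k)
def Om (k : Type*) [Field k] : Module.End k (PP k ⊗[k] PP k) := (-1 : k) • oB k + oA k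

lemma transvectant_eq (n m r : ℕ) (f g : PP k) :
    transvectant n m r f g = C ((((m - r).factorial * (n - r).factorial : ℕ) : k) /
      ((n.factorial * m.factorial : ℕ) : k)) *
      LinearMap.mul' k (PP k) ((Om k ^ r) (f ⊗ₜ[k] g)) := by
  unfold transvectant
  congr 1
  have hc : Commute ((-1 : k) • oB k) (oA k) := by
    apply Commute.smul_left
    change _ * _ = _ * _
    rw [oA, oB, ← TensorProduct.map_mul, ← TensorProduct.map_mul, (dAB_comm (k := k)).eq]
  rw [Om, hc.add_pow]
  rw [LinearMap.sum_apply, map_sum]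
  refine Finset.sum_congr rfl fun j hj => ?_
  rw [smul_pow, oA, oB, TensorProduct.map_pow, TensorProduct.map_pow]
  simp only [dA_iter, dB_iter]
  have e1 : ((r.choose j : ℕ) : Module.End k (PP k ⊗[k] PP k)) = ((r.choose j : ℕ) : k) • 1 := by
    rw [← Nat.smul_one_eq_cast, ← Nat.cast_smul_eq_nsmul k]
  have e3 : (dB k ^ j) ((dA k ^ (r - j)) f) = (dA k ^ (r - j)) ((dB k ^ j) f) := by
    have := ((dAB_comm (k := k)).pow_pow (r - j) j).eq
    exact (congrArg (fun D => D f) this).symm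
  rw [e1]
  simp only [Module.End.mul_apply, LinearMap.smul_apply, map_smul, Module.End.one_apply,
    TensorProduct.map_tmul, LinearMap.mul'_apply, e3, smul_eq_C_mul, C_mul]
  ring

/-- linear substitution -/
def S (α β γ δ : k) : PP k →ₐ[k] PP k :=
  aeval ![C α * X 0 + C β * X 1, C γ * X 0 + C δ * X 1]

lemma dA_mul (f g : PP k) : dA k (f * g) = f * dA k g + g * dA k f := by
  simp [dA]
lemma dB_mul (f g : PP k) : dB k (f * g) = f * dB k g + g * dB k f := by
  simp [dB]

lemma dA_S (α β γ δ : k) (f : PP k) : dA k (S α β γ δ f) = S α β γ δ (C α * dA k f + C γ * dB k f) := by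
  induction f using MvPolynomial.induction_on with
  | C a => simp [dA, dB, S]
  | add p q hp hq => simp only [map_add, hp, hq, map_mul]; ring
  | mul_X p i hp =>
    rw [map_mul, dA_mul, hp]
    simp only [dA_mul, dB_mul, map_add, map_mul]
    fin_cases i <;> simp [dA, dB, S, pderiv_X] <;> ring

lemma dB_S (α β γ δ : k) (f : PP k) : dB k (S α β γ δ f) = S α β γ δ (C β * dA k f + C δ * dB k f) := by
  induction f using MvPolynomial.induction_on with
  | C a => simp [dA, dB, S]
  | add p q hp hq => simp only [map_add, hp, hq, map_mul]; ring
  | mul_X p i hp =>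
    rw [map_mul, dB_mul, hp]
    simp only [dA_mul, dB_mul, map_add, map_mul]
    fin_cases i <;> simp [dA, dB, S, pderiv_X] <;> ring

lemma Om_S (α β γ δ : k) (h : α * δ - β * γ = 1) (x) :
    Om k (TensorProduct.map (S α β γ δ).toLinearMap (S α β γ δ).toLinearMap x) =
      TensorProduct.map (S α β γ δ).toLinearMap (S α β γ δ).toLinearMap (Om k x) := by
  induction x using TensorProduct.induction_on with
  | zero => simp
  | add x y hx hy => simp only [map_add, hx, hy]
  | tmul f g =>
    simp only [Om, oA, oB, TensorProduct.map_tmul, LinearMap.add_apply, LinearMap.smul_apply,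
      AlgHom.toLinearMap_apply, dA_S, dB_S, ← smul_eq_C_mul, map_add, map_smul,
      TensorProduct.tmul_add, TensorProduct.add_tmul, TensorProduct.tmul_smul,
      ← TensorProduct.smul_tmul']
    generalize (S α β γ δ) ((dA k) f) ⊗ₜ[k] (S α β γ δ) ((dA k) g) = x1
    generalize (S α β γ δ) ((dA k) f) ⊗ₜ[k] (S α β γ δ) ((dB k) g) = x2
    generalize (S α β γ δ) ((dB k) f) ⊗ₜ[k] (S α β γ δ) ((dA k) g) = x3
    generalize (S α β γ δ) ((dB k) f) ⊗ₜ[k] (S α β γ δ) ((dB k) g) = x4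
    linear_combination (norm := module) h • (x2 - x3)

lemma mul_S (α β γ δ : k) (x) : LinearMap.mul' k (PP k)
    (TensorProduct.map (S α β γ δ).toLinearMap (S α β γ δ).toLinearMap x) =
    S α β γ δ (LinearMap.mul' k (PP k) x) := by
  induction x using TensorProduct.induction_on with
  | zero => simp
  | add x y hx hy => simp only [map_add, hx, hy]
  | tmul f g => simp

lemma trans_S (α β γ δ : k) (h : α * δ - β * γ = 1) (n m r : ℕ) (f g : PP k) :
    transvectant n m r (S α β γ δ f) (S α β γ δ g) = S α β γ δ (transvectant n m r f g) := by
  rw [transvectant_eq, transvectant_eq, map_mul, ← mul_S]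
  congr 1
  · simp [S]
  congr 1
  have : ∀ x, (Om k ^ r) (TensorProduct.map (S α β γ δ).toLinearMap (S α β γ δ).toLinearMap x) =
      TensorProduct.map (S α β γ δ).toLinearMap (S α β γ δ).toLinearMap ((Om k ^ r) x) := by
    induction r with
    | zero => simp
    | succ r ih => intro x; rw [pow_succ', Module.End.mul_apply, ih, Om_S _ _ _ _ h]; rfl
  rw [← this]; simp

lemma cc_S (α β γ δ : k) (f : PP k) : constantCoeff (S α β γ δ f) = constantCoeff f := by
  induction f using MvPolynomial.induction_on with
  | C a => simp [S]
  | add p q hp hq => simp only [map_add, hp, hq]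
  | mul_X p i hp => fin_cases i <;> simp [S]

lemma S_inv (α β γ δ : k) (h : α * δ - β * γ = 1) (f : PP k) :
    S δ (-β) (-γ) α (S α β γ δ f) = f := by
  have h' : C α * C δ - C β * C γ = (1 : PP k) := by simp only [← C_mul, ← C_sub, h, C_1]
  induction f using MvPolynomial.induction_on with
  | C a => simp [S]
  | add p q hp hq => simp only [map_add, hp, hq]
  | mul_X p i hp =>
    rw [map_mul, map_mul, hp]; congr 1
    fin_cases i <;> simp [S]
    · linear_combination X 0 * h'
    · linear_combination X 1 * h'

/-! ### normalized forms -/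
def nf (n : ℕ) (c : ℕ → k) : PP k :=
  ∑ i ∈ Finset.range (n + 1), C ((n.choose i : k) * c i) * X 0 ^ i * X 1 ^ (n - i)

lemma dA_nf (n : ℕ) (c : ℕ → k) :
    dA k (nf (n + 1) c) = C ((n + 1 : ℕ) : k) * nf n (fun i => c (i + 1)) := by
  simp only [nf, map_sum, Finset.mul_sum]
  rw [Finset.sum_range_succ']
  have h0 : dA k (C (((n + 1).choose 0 : k) * c 0) * X 0 ^ 0 * X 1 ^ (n + 1 - 0)) = 0 := by
    simp [dA, pderiv_X]
  rw [h0, add_zero]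
  refine Finset.sum_congr rfl fun i hi => ?_
  have h1 : ((n + 1 : ℕ) : k) * (n.choose i : k) = ((n + 1).choose (i + 1) : k) * ((i + 1 : ℕ) : k) := by
    rw [← Nat.cast_mul, ← Nat.cast_mul, Nat.add_one_mul_choose_eq n i]
  have h2 : n + 1 - (i + 1) = n - i := by omega
  rw [h2]
  have h3 : dA k (C (((n + 1).choose (i + 1) : k) * c (i + 1)) * X 0 ^ (i + 1) * X 1 ^ (n - i)) =
     C (((n + 1).choose (i + 1) : k) * ((i + 1 : ℕ) : k) * c (i + 1)) * X 0 ^ i * X 1 ^ (n - i) := by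
    simp [dA, pderiv_X]; ring
  rw [h3, ← h1]; simp only [C_mul]; ring

lemma dB_nf (n : ℕ) (c : ℕ → k) :
    dB k (nf (n + 1) c) = C ((n + 1 : ℕ) : k) * nf n c := by
  simp only [nf, map_sum, Finset.mul_sum]
  rw [Finset.sum_range_succ]
  have h0 : dB k (C (((n + 1).choose (n + 1) : k) * c (n + 1)) * X 0 ^ (n + 1) * X 1 ^ (n + 1 - (n + 1))) = 0 := by
    simp [dB, pderiv_X]
  rw [h0, add_zero]
  refine Finset.sum_congr rfl fun i hi => ?_
  have hi' : i ≤ n := by simpa [Nat.lt_succ_iff] using hi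
  have h1 : ((n + 1 : ℕ) : k) * (n.choose i : k) = ((n + 1).choose i : k) * ((n - i + 1 : ℕ) : k) := by
    have := Nat.choose_mul_succ_eq n i
    rw [show n + 1 - i = n - i + 1 by omega] at this
    rw [mul_comm]
    rw [← Nat.cast_mul, ← Nat.cast_mul, this]
  have h2 : n + 1 - i = n - i + 1 := by omega
  rw [h2]
  have h3 : dB k (C (((n + 1).choose i : k) * c i) * X 0 ^ i * X 1 ^ (n - i + 1)) =
     C (((n + 1).choose i : k) * ((n - i + 1 : ℕ) : k) * c i) * X 0 ^ i * X 1 ^ (n - i) := by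
    simp [dB, pderiv_X]; ring
  rw [h3, ← h1]; simp only [C_mul]; ring

lemma dA_pow_nf (r n : ℕ) (c : ℕ → k) :
    (dA k ^ r) (nf (n + r) c) = C (((n + r).descFactorial r : ℕ) : k) * nf n (fun i => c (i + r)) := by
  induction r generalizing c with
  | zero => simp
  | succ r ih =>
    rw [pow_succ, Module.End.mul_apply, ← add_assoc, dA_nf, ← smul_eq_C_mul, map_smul, ih, smul_eq_C_mul,
      ← mul_assoc, ← C_mul, Nat.succ_descFactorial_succ]
    push_cast
    simp only [add_assoc]

lemma dB_pow_nf (r n : ℕ) (c : ℕ → k) :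
    (dB k ^ r) (nf (n + r) c) = C (((n + r).descFactorial r : ℕ) : k) * nf n c := by
  induction r generalizing c with
  | zero => simp
  | succ r ih =>
    rw [pow_succ, Module.End.mul_apply, ← add_assoc, dB_nf, ← smul_eq_C_mul, map_smul, ih, smul_eq_C_mul,
      ← mul_assoc, ← C_mul, Nat.succ_descFactorial_succ]
    push_cast
    rfl

lemma dAB_nf (r n j : ℕ) (hj : j ≤ r) (c : ℕ → k) :
    (dA k ^ (r - j)) ((dB k ^ j) (nf (n + r) c)) =
      C (((n + r).descFactorial r : ℕ) : k) * nf n (fun i => c (i + (r - j))) := by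
  obtain ⟨s, rfl⟩ := Nat.exists_eq_add_of_le hj
  rw [show n + (j + s) = (n + s) + j by omega, dB_pow_nf, ← smul_eq_C_mul, map_smul, Nat.add_sub_cancel_left,
    dA_pow_nf, smul_eq_C_mul, ← mul_assoc, ← C_mul, ← Nat.cast_mul]
  congr 4
  apply Nat.eq_of_mul_eq_mul_left (Nat.factorial_pos n)
  have h1 := Nat.factorial_mul_descFactorial (show s ≤ n + s by omega)
  have h2 := Nat.factorial_mul_descFactorial (show j ≤ n + s + j by omega)
  have h3 := Nat.factorial_mul_descFactorial (show j + s ≤ n + s + j by omega)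
  rw [show n + s - s = n by omega] at h1
  rw [show n + s + j - j = n + s by omega] at h2
  rw [show n + s + j - (j + s) = n by omega] at h3
  rw [h3, ← h2, ← h1]
  ring

lemma dAB_nf' (r n j : ℕ) (hj : j ≤ r) (c : ℕ → k) :
    (dA k ^ j) ((dB k ^ (r - j)) (nf (n + r) c)) =
      C (((n + r).descFactorial r : ℕ) : k) * nf n (fun i => c (i + j)) := by
  have := dAB_nf r n (r - j) (by omega) c
  rwa [Nat.sub_sub_self hj] at this

lemma trans_nf (n m r : ℕ) (c d : ℕ → k) (hn : ((n + r).factorial : k) ≠ 0)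
    (hm : ((m + r).factorial : k) ≠ 0) :
    transvectant (n + r) (m + r) r (nf (n + r) c) (nf (m + r) d) =
      ∑ j ∈ Finset.range (r + 1), C ((-1 : k) ^ j * (r.choose j : k)) *
        nf n (fun i => c (i + (r - j))) * nf m (fun i => d (i + j)) := by
  unfold transvectant
  rw [Finset.mul_sum]
  refine Finset.sum_congr rfl fun j hj => ?_
  have hj' : j ≤ r := by simpa [Nat.lt_succ_iff] using hj
  simp only [dA_iter, dB_iter, dAB_nf _ _ _ hj', dAB_nf' _ _ _ hj']
  have e : ((((m + r - r).factorial * (n + r - r).factorial : ℕ) : k) /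
      (((n + r).factorial * (m + r).factorial : ℕ) : k)) * (((n + r).descFactorial r : ℕ) : k) *
      (((m + r).descFactorial r : ℕ) : k) = 1 := by
    have h1 := Nat.factorial_mul_descFactorial (show r ≤ n + r by omega)
    have h2 := Nat.factorial_mul_descFactorial (show r ≤ m + r by omega)
    rw [← h1, ← h2] 
    rw [← h1] at hn
    rw [← h2] at hm
    push_cast at hn hm ⊢
    rw [mul_ne_zero_iff] at hn hm
    obtain ⟨a1, a2⟩ := hn
    obtain ⟨a3, a4⟩ := hm
    field_simp
  have e' := congrArg (C : k → PP k) e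
  simp only [C_mul, C_1] at e'
  simp only [C_mul]
  linear_combination ((C ((-1) ^ j) * C (r.choose j : k)) * nf n (fun i => c (i + (r - j))) * nf m (fun i => d (i + j))) * e'

lemma coeff_term (n i j : ℕ) (hi : i ≤ n) (hj : j ≤ n) (a : k) :
    coeff (Finsupp.single (0 : Fin 2) i + Finsupp.single (1 : Fin 2) (n - i))
      (C a * X 0 ^ j * X 1 ^ (n - j)) = if i = j then a else 0 := by
  rw [mul_assoc, coeff_C_mul, X_pow_eq_monomial, X_pow_eq_monomial, monomial_mul, coeff_monomial]
  split_ifs with h1 h2 h2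
  · simp
  · exfalso; apply h2
    have := DFunLike.congr_fun h1 0
    simpa using this.symm
  · exfalso; apply h1; rw [h2]
  · simp

lemma coeff_nf (n i : ℕ) (hi : i ≤ n) (c : ℕ → k) :
    coeff (Finsupp.single (0 : Fin 2) i + Finsupp.single (1 : Fin 2) (n - i)) (nf n c) =
      (n.choose i : k) * c i := by
  rw [nf, coeff_sum, Finset.sum_eq_single i]
  · rw [coeff_term n i i hi hi, if_pos rfl]
  · intro b hb hne
    rw [coeff_term n i b hi (by simpa [Nat.lt_succ_iff] using hb), if_neg (Ne.symm hne)]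
  · intro h; simp at h; omega

lemma choose_ne (n i : ℕ) (hi : i ≤ n) (hn : (n.factorial : k) ≠ 0) : (n.choose i : k) ≠ 0 := by
  rw [← Nat.choose_mul_factorial_mul_factorial hi] at hn
  push_cast at hn
  intro h
  apply hn
  rw [h]; ring

lemma nf_inj (n : ℕ) (hn : (n.factorial : k) ≠ 0) (c d : ℕ → k) (h : nf n c = nf n d) (i : ℕ)
    (hi : i ≤ n) : c i = d i := by
  have := coeff_nf n i hi c
  rw [h, coeff_nf n i hi d] at this
  exact (mul_left_cancel₀ (choose_ne n i hi hn) this).symm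

lemma hom_nf (n : ℕ) (c : ℕ → k) : (nf n c).IsHomogeneous n := by
  refine IsHomogeneous.sum _ _ _ fun i hi => ?_
  have hi' : i ≤ n := by simpa [Nat.lt_succ_iff] using hi
  have := ((isHomogeneous_C (Fin 2) ((n.choose i : k) * c i)).mul ((isHomogeneous_X k (0 : Fin 2)).pow i)).mul
    ((isHomogeneous_X k (1 : Fin 2)).pow (n - i))
  convert this using 1
  omega

lemma hom_lin (α β : k) : (C α * X 0 + C β * X 1 : PP k).IsHomogeneous 1 := by
  have h1 := (isHomogeneous_C (Fin 2) α).mul (isHomogeneous_X k (0 : Fin 2))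
  have h2 := (isHomogeneous_C (Fin 2) β).mul (isHomogeneous_X k (1 : Fin 2))
  rw [zero_add] at h1 h2
  exact h1.add h2

lemma hom_S (α β γ δ : k) (n : ℕ) (f : PP k) (hf : f.IsHomogeneous n) : (S α β γ δ f).IsHomogeneous n := by
  have h := IsHomogeneous.aeval (n := 1) hf
    (![C α * X 0 + C β * X 1, C γ * X 0 + C δ * X 1] : Fin 2 → PP k) (by
      intro i
      fin_cases i
      · exact hom_lin α β
      · exact hom_lin γ δ)
  rw [one_mul] at h
  exact h

lemma exists_nf (n : ℕ) (hn : (n.factorial : k) ≠ 0) (f : PP k) (hf : f.IsHomogeneous n) :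
    ∃ c, f = nf n c := by
  refine ⟨fun i => coeff (Finsupp.single (0 : Fin 2) i + Finsupp.single (1 : Fin 2) (n - i)) f /
    (n.choose i : k), ?_⟩
  ext m
  by_cases hm : m.degree = n
  · have h1 : m 0 + m 1 = n := by
      rw [← hm, Finsupp.degree_eq_sum]; simp
    have h2 : m = Finsupp.single (0 : Fin 2) (m 0) + Finsupp.single (1 : Fin 2) (n - m 0) := by
      ext i; fin_cases i
      · simp
      · simp; omega
    rw [h2, coeff_nf n (m 0) (by omega), mul_div_cancel₀]
    exact choose_ne n _ (by omega) hn
  · rw [hf.coeff_eq_zero hm, (hom_nf n _).coeff_eq_zero hm]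

set_option linter.unusedSimpArgs false

def Gf (c : ℕ → k) : ℕ → k
  | 0 => (2) * c 0 * c 4 + (-8) * c 1 * c 3 + (6) * c 2 * c 2
  | 1 => (1) * c 0 * c 5 + (-3) * c 1 * c 4 + (2) * c 2 * c 3
  | 2 => ((3) * c 0 * c 6 + (-4) * c 1 * c 5 + (-11) * c 2 * c 4 + (12) * c 3 * c 3) / 7
  | 3 => ((1) * c 0 * c 7 + (2) * c 1 * c 6 + (-12) * c 2 * c 5 + (9) * c 3 * c 4) / 7
  | 4 => ((1) * c 0 * c 8 + (12) * c 1 * c 7 + (-22) * c 2 * c 6 + (-36) * c 3 * c 5 + (45) * c 4 * c 4) / 35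
  | 5 => ((1) * c 1 * c 8 + (2) * c 2 * c 7 + (-12) * c 3 * c 6 + (9) * c 4 * c 5) / 7
  | 6 => ((3) * c 2 * c 8 + (-4) * c 3 * c 7 + (-11) * c 4 * c 6 + (12) * c 5 * c 5) / 7
  | 7 => (1) * c 3 * c 8 + (-3) * c 4 * c 7 + (2) * c 5 * c 6
  | 8 => (2) * c 4 * c 8 + (-8) * c 5 * c 7 + (6) * c 6 * c 6
  | _ => 0

def Kf (c : ℕ → k) : ℕ → k
  | 0 => (2) * c 0 * c 6 + (-12) * c 1 * c 5 + (30) * c 2 * c 4 + (-20) * c 3 * c 3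
  | 1 => (1) * c 0 * c 7 + (-5) * c 1 * c 6 + (9) * c 2 * c 5 + (-5) * c 3 * c 4
  | 2 => ((1) * c 0 * c 8 + (-2) * c 1 * c 7 + (-8) * c 2 * c 6 + (34) * c 3 * c 5 + (-25) * c 4 * c 4) / 3
  | 3 => (1) * c 1 * c 8 + (-5) * c 2 * c 7 + (9) * c 3 * c 6 + (-5) * c 4 * c 5
  | 4 => (2) * c 2 * c 8 + (-12) * c 3 * c 7 + (30) * c 4 * c 6 + (-20) * c 5 * c 5
  | _ => 0

def Hf (c : ℕ → k) : ℕ → k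
  | 0 => (2) * c 0 * c 2 + (-2) * c 1 * c 1
  | 1 => (1) * c 0 * c 3 + (-1) * c 1 * c 2
  | 2 => ((1) * c 0 * c 4 + (2) * c 1 * c 3 + (-3) * c 2 * c 2) / 3
  | 3 => (1) * c 1 * c 4 + (-1) * c 2 * c 3
  | 4 => (2) * c 2 * c 4 + (-2) * c 3 * c 3
  | _ => 0

lemma cok2 (hk : CharOK k) : (2 : k) ≠ 0 ∧ (3 : k) ≠ 0 ∧ (5 : k) ≠ 0 ∧ (7 : k) ≠ 0 := by
  have key : ∀ p : ℕ, p.Prime → ringChar k ≠ p → (p : k) ≠ 0 := by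
    intro p hp hne h0
    have := (ringChar.spec k p).1 h0
    rcases (Nat.dvd_prime hp).1 this with h | h
    · exact CharP.ringChar_ne_one h
    · exact hne h
  obtain ⟨h2, h3, h5, h7⟩ := hk
  exact ⟨by exact_mod_cast key 2 (by norm_num) h2, by exact_mod_cast key 3 (by norm_num) h3,
    by exact_mod_cast key 5 (by norm_num) h5, by exact_mod_cast key 7 (by norm_num) h7⟩

lemma fac8 (hk : CharOK k) : ((8 : ℕ).factorial : k) ≠ 0 := by
  obtain ⟨h2, h3, h5, h7⟩ := cok2 hk
  have : ((8 : ℕ).factorial : k) = 2 ^ 7 * 3 ^ 2 * 5 * 7 := by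
    norm_num [Nat.factorial]
  rw [this]
  simp [h2, h3, h5, h7]

lemma fac4 (hk : CharOK k) : ((4 : ℕ).factorial : k) ≠ 0 := by
  obtain ⟨h2, h3, h5, h7⟩ := cok2 hk
  have : ((4 : ℕ).factorial : k) = 2 ^ 3 * 3 := by
    norm_num [Nat.factorial]
  rw [this]
  simp [h2, h3]

lemma nf0 (c : ℕ → k) : nf 0 c = C (c 0) := by simp [nf]

lemma ch84 : Nat.choose 8 4 = 70 := by decide
lemma ch83 : Nat.choose 8 3 = 56 := by decide
lemma ch85 : Nat.choose 8 5 = 56 := by decide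
lemma ch82 : Nat.choose 8 2 = 28 := by decide
lemma ch86 : Nat.choose 8 6 = 28 := by decide
lemma ch87 : Nat.choose 8 7 = 8 := by decide
lemma ch62 : Nat.choose 6 2 = 15 := by decide
lemma ch63 : Nat.choose 6 3 = 20 := by decide
lemma ch64 : Nat.choose 6 4 = 15 := by decide
lemma ch65 : Nat.choose 6 5 = 6 := by decide
lemma ch42 : Nat.choose 4 2 = 6 := by decide
lemma ch43 : Nat.choose 4 3 = 4 := by decide

lemma Kt (hk : CharOK k) (c : ℕ → k) :
    transvectant 8 8 6 (nf 8 c) (nf 8 c) = nf 4 (Kf c) := by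
  obtain ⟨h2, h3, h5, h7⟩ := cok2 hk
  rw [trans_nf 2 2 6 c c (fac8 hk) (fac8 hk)]
  have e : (6 : k) * Kf c 2 = 2 * ((1) * c 0 * c 8 + (-2) * c 1 * c 7 + (-8) * c 2 * c 6 + (34) * c 3 * c 5 + (-25) * c 4 * c 4) := by
    simp only [Kf]; field_simp; ring
  simp only [nf, Finset.sum_range_succ, Finset.sum_range_zero, Nat.choose_self, Nat.choose_zero_right, Nat.choose_one_right, ch42, ch43, ch62, ch63, ch64, ch65, zero_add, Nat.cast_one, Nat.cast_ofNat, e, Nat.reduceSub, Nat.reduceAdd]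
  simp only [Kf, map_add, map_mul, map_neg, map_ofNat, map_pow, map_one]
  ring

lemma Ht (hk : CharOK k) (c : ℕ → k) :
    transvectant 4 4 2 (nf 4 c) (nf 4 c) = nf 4 (Hf c) := by
  obtain ⟨h2, h3, h5, h7⟩ := cok2 hk
  rw [trans_nf 2 2 2 c c (fac4 hk) (fac4 hk)]
  have e : (6 : k) * Hf c 2 = 2 * (c 0 * c 4 + 2 * c 1 * c 3 - 3 * c 2 * c 2) := by
    simp only [Hf]; field_simp; ring
  simp only [nf, Finset.sum_range_succ, Finset.sum_range_zero, Nat.choose_self, Nat.choose_zero_right, Nat.choose_one_right, ch42, ch43, ch62, ch63, ch64, ch65, zero_add, Nat.cast_one, Nat.cast_ofNat, e, Nat.reduceSub, Nat.reduceAdd]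
  simp only [Hf, map_add, map_mul, map_sub, map_neg, map_ofNat, map_pow, map_one]
  ring

def Mf (c d : ℕ → k) : ℕ → k := fun i =>
  c (i + 4) * d 0 - 4 * c (i + 3) * d 1 + 6 * c (i + 2) * d 2 - 4 * c (i + 1) * d 3 + c i * d 4

lemma Mt (hk : CharOK k) (c d : ℕ → k) :
    transvectant 8 4 4 (nf 8 c) (nf 4 d) = nf 4 (Mf c d) := by
  rw [trans_nf 4 0 4 c d (fac8 hk) (fac4 hk)]
  simp only [nf0]
  simp only [Mf, nf, Finset.sum_range_succ, Finset.sum_range_zero, Nat.choose_self, Nat.choose_zero_right, Nat.choose_one_right, ch42, ch43, ch62, ch63, ch64, ch65, zero_add, Nat.cast_one, Nat.cast_ofNat, Nat.reduceSub, Nat.reduceAdd]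
  simp only [map_add, map_mul, map_sub, map_neg, map_ofNat, map_pow, map_one]
  ring

lemma Q44 (hk : CharOK k) (c d : ℕ → k) :
    constantCoeff (transvectant 4 4 4 (nf 4 c) (nf 4 d)) =
      c 4 * d 0 - 4 * c 3 * d 1 + 6 * c 2 * d 2 - 4 * c 1 * d 3 + c 0 * d 4 := by
  rw [trans_nf 0 0 4 c d (fac4 hk) (fac4 hk)]
  simp only [nf0]
  simp only [Finset.sum_range_succ, Finset.sum_range_zero, Nat.choose_self, Nat.choose_zero_right, Nat.choose_one_right, ch42, ch43, ch62, ch63, ch64, ch65, zero_add, Nat.cast_one, Nat.cast_ofNat, Nat.reduceSub, Nat.reduceAdd, map_add, map_mul, constantCoeff_C]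
  ring

lemma Q88 (hk : CharOK k) (c d : ℕ → k) :
    constantCoeff (transvectant 8 8 8 (nf 8 c) (nf 8 d)) =
      c 8 * d 0 - 8 * c 7 * d 1 + 28 * c 6 * d 2 - 56 * c 5 * d 3 + 70 * c 4 * d 4
      - 56 * c 3 * d 5 + 28 * c 2 * d 6 - 8 * c 1 * d 7 + c 0 * d 8 := by
  rw [trans_nf 0 0 8 c d (fac8 hk) (fac8 hk)]
  simp only [nf0]
  simp only [Finset.sum_range_succ, Finset.sum_range_zero, Nat.choose_self, Nat.choose_zero_right, Nat.choose_one_right, ch82, ch83, ch84, ch85, ch86, ch87, zero_add, Nat.cast_one, Nat.cast_ofNat, Nat.reduceSub, Nat.reduceAdd, map_add, map_mul, constantCoeff_C]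
  ring

lemma Gt (hk : CharOK k) (c : ℕ → k) :
    transvectant 8 8 4 (nf 8 c) (nf 8 c) = nf 8 (Gf c) := by
  obtain ⟨h2, h3, h5, h7⟩ := cok2 hk
  have h35 : (35 : k) ≠ 0 := by
    rw [show (35 : k) = 5 * 7 by norm_num]; exact mul_ne_zero h5 h7
  rw [trans_nf 4 4 4 c c (fac8 hk) (fac8 hk)]
  have e2 : (28 : k) * Gf c 2 = 4 * ((3) * c 0 * c 6 + (-4) * c 1 * c 5 + (-11) * c 2 * c 4 + (12) * c 3 * c 3) := by
    simp only [Gf]; field_simp; ring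
  have e3 : (56 : k) * Gf c 3 = 8 * ((1) * c 0 * c 7 + (2) * c 1 * c 6 + (-12) * c 2 * c 5 + (9) * c 3 * c 4) := by
    simp only [Gf]; field_simp; ring
  have e4 : (70 : k) * Gf c 4 = 2 * ((1) * c 0 * c 8 + (12) * c 1 * c 7 + (-22) * c 2 * c 6 + (-36) * c 3 * c 5 + (45) * c 4 * c 4) := by
    simp only [Gf]; field_simp; ring
  have e5 : (56 : k) * Gf c 5 = 8 * ((1) * c 1 * c 8 + (2) * c 2 * c 7 + (-12) * c 3 * c 6 + (9) * c 4 * c 5) := by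
    simp only [Gf]; field_simp; ring
  have e6 : (28 : k) * Gf c 6 = 4 * ((3) * c 2 * c 8 + (-4) * c 3 * c 7 + (-11) * c 4 * c 6 + (12) * c 5 * c 5) := by
    simp only [Gf]; field_simp; ring
  simp only [nf, Finset.sum_range_succ, Finset.sum_range_zero, Nat.choose_self, Nat.choose_zero_right, Nat.choose_one_right, ch42, ch43, ch82, ch83, ch84, ch85, ch86, ch87, zero_add, Nat.cast_one, Nat.cast_ofNat, e2, e3, e4, e5, e6, Nat.reduceSub, Nat.reduceAdd]
  simp only [Gf, map_add, map_mul, map_neg, map_ofNat, map_pow, map_one]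
  ring

/-! ### invariants as properties of forms -/
def JZ (F : PP k) : Prop :=
  constantCoeff (transvectant 8 8 8 F F) = 0 ∧
  constantCoeff (transvectant 8 8 8 F (transvectant 8 8 4 F F)) = 0 ∧
  constantCoeff (transvectant 4 4 4 (transvectant 8 8 6 F F) (transvectant 8 8 6 F F)) = 0 ∧
  constantCoeff (transvectant 4 4 4 (transvectant 8 4 4 F (transvectant 8 8 6 F F))
    (transvectant 8 8 6 F F)) = 0 ∧
  constantCoeff (transvectant 4 4 4 (transvectant 8 8 6 F F)
    (transvectant 4 4 2 (transvectant 8 8 6 F F) (transvectant 8 8 6 F F))) = 0 ∧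
  constantCoeff (transvectant 4 4 4 (transvectant 8 4 4 F (transvectant 8 8 6 F F))
    (transvectant 4 4 2 (transvectant 8 8 6 F F) (transvectant 8 8 6 F F))) = 0 ∧
  constantCoeff (transvectant 4 4 4
    (transvectant 8 4 4 (transvectant 8 8 4 F F) (transvectant 8 8 6 F F))
    (transvectant 4 4 2 (transvectant 8 8 6 F F) (transvectant 8 8 6 F F))) = 0

def R5 (F : PP k) : Prop :=
  ∃ x0 y0 : k, ¬(x0 = 0 ∧ y0 = 0) ∧ (C y0 * X 0 - C x0 * X 1) ^ 5 ∣ F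

lemma JZ_iff (hk : CharOK k) (a : Fin 9 → k) :
    (J2 a = 0 ∧ J3 a = 0 ∧ J4 a = 0 ∧ J5 a = 0 ∧ J6 a = 0 ∧ J7 a = 0 ∧ J8 a = 0) ↔
      JZ (octForm a) := by
  obtain ⟨h2, h3, h5, h7⟩ := cok2 hk
  simp only [J2, J3, J4, J5, J6, J7, J8, JZ, covg, covk, covh, covm, covp, mul_eq_zero, div_eq_zero_iff,
    pow_eq_zero_iff, h2, h3, h5, h7, ne_eq, OfNat.ofNat_ne_zero, not_false_eq_true, false_or, or_false]

lemma JZ_S (α β γ δ : k) (h : α * δ - β * γ = 1) (F : PP k) (hF : JZ F) : JZ (S α β γ δ F) := by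
  unfold JZ at *
  simp only [trans_S α β γ δ h, cc_S]
  exact hF

lemma R5_S (α β γ δ : k) (h : α * δ - β * γ = 1) (F : PP k) (hF : R5 F) : R5 (S α β γ δ F) := by
  obtain ⟨x, y, hne, hd⟩ := hF
  refine ⟨x * δ - y * β, y * α - x * γ, ?_, ?_⟩
  · rintro ⟨e1, e2⟩
    apply hne
    constructor
    · linear_combination α * e1 + β * e2 - x * h
    · linear_combination γ * e1 + δ * e2 - y * h
  · have := map_dvd (S α β γ δ) hd
    convert this using 1
    simp [S]
    ring

lemma R5_S' (α β γ δ : k) (h : α * δ - β * γ = 1) (F : PP k) (hF : R5 (S α β γ δ F)) : R5 F := by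
  have := R5_S δ (-β) (-γ) α (by linear_combination h) _ hF
  rwa [S_inv _ _ _ _ h] at this

lemma JZ_S' (α β γ δ : k) (h : α * δ - β * γ = 1) (F : PP k) (hF : JZ (S α β γ δ F)) : JZ F := by
  have := JZ_S δ (-β) (-γ) α (by linear_combination h) _ hF
  rwa [S_inv _ _ _ _ h] at this

lemma exists_SL (x y : k) (h : ¬(x = 0 ∧ y = 0)) : ∃ α γ : k, α * y - x * γ = 1 := by
  by_cases hy : y = 0
  · have hx : x ≠ 0 := fun hx => h ⟨hx, hy⟩
    exact ⟨0, -x⁻¹, by field_simp; simp⟩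
  · exact ⟨y⁻¹, 0, by field_simp; simp⟩

lemma eval_S (α β γ δ : k) (F : PP k) : eval ![0, 1] (S α β γ δ F) = eval ![β, δ] F := by
  induction F using MvPolynomial.induction_on with
  | C a => simp [S]
  | add p q hp hq => simp only [map_add, hp, hq]
  | mul_X p i hp => rw [map_mul, map_mul, hp, map_mul]; congr 1; fin_cases i <;> simp [S]

lemma eval_nf (n : ℕ) (c : ℕ → k) : eval ![0, 1] (nf n c) = c 0 := by
  rw [nf, map_sum, Finset.sum_eq_single 0]
  · simp
  · intro b _ hb; simp [hb]
  · simp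

lemma exists_zero [IsAlgClosed k] (n : ℕ) (hn : n ≠ 0) (c : ℕ → k) :
    ∃ x y : k, ¬(x = 0 ∧ y = 0) ∧ eval ![x, y] (nf n c) = 0 := by
  by_cases hc : (n.choose n : k) * c n = 0
  · refine ⟨1, 0, by simp, ?_⟩
    rw [nf, map_sum, Finset.sum_eq_single n]
    · simpa using hc
    · intro b hb hne
      have : n - b ≠ 0 := by simp at hb; omega
      simp [this]
    · simp
  · set q : Polynomial k := ∑ i ∈ Finset.range (n + 1), Polynomial.monomial i ((n.choose i : k) * c i)
    have hq : q.coeff n = (n.choose n : k) * c n := by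
      simp [q, Polynomial.finsetSum_coeff, Polynomial.coeff_monomial]
    have hd : q.degree ≠ 0 := by
      intro h
      have : q.coeff n = 0 := Polynomial.coeff_eq_zero_of_degree_lt (by
        rw [h]; exact_mod_cast Nat.pos_of_ne_zero hn)
      exact hc (hq ▸ this)
    obtain ⟨x, hx⟩ := IsAlgClosed.exists_root q hd
    refine ⟨x, 1, by simp, ?_⟩
    simp [q, Polynomial.IsRoot, Polynomial.eval_finsetSum] at hx
    simpa [nf] using hx

lemma S_nf (α β γ δ : k) (n : ℕ) (hn : (n.factorial : k) ≠ 0) (c : ℕ → k) :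
    ∃ d, S α β γ δ (nf n c) = nf n d :=
  exists_nf n hn _ (hom_S _ _ _ _ _ _ (hom_nf n c))

def sh (t : k) (c : ℕ → k) (i : ℕ) : k := ∑ j ∈ Finset.range (i + 1), (i.choose j : k) * t ^ j * c (i - j)

lemma ch5 : Nat.choose 5 2 = 10 ∧ Nat.choose 5 3 = 10 ∧ Nat.choose 5 4 = 5 := by decide
lemma ch7 : Nat.choose 7 2 = 21 ∧ Nat.choose 7 3 = 35 ∧ Nat.choose 7 4 = 35 ∧ Nat.choose 7 5 = 21 ∧
  Nat.choose 7 6 = 7 := by decide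
lemma ch32 : Nat.choose 3 2 = 3 := by decide

lemma S_sh8 (t : k) (c : ℕ → k) : S 1 0 t 1 (nf 8 c) = nf 8 (sh t c) := by
  obtain ⟨a1, a2, a3⟩ := ch5
  obtain ⟨b1, b2, b3, b4, b5⟩ := ch7
  simp only [nf, map_sum, map_mul, map_pow]
  have hC : ∀ a : k, S 1 0 t 1 (C a) = C a := fun a => by simp [S]
  have h0 : S 1 0 t 1 (X 0) = X 0 := by simp [S]
  have h1 : S 1 0 t 1 (X 1) = C t * X 0 + X 1 := by simp [S]
  simp only [hC, h0, h1]
  simp only [sh, Finset.sum_range_succ, Finset.sum_range_zero, Nat.choose_self, Nat.choose_zero_right, Nat.choose_one_right, a1, a2, a3, b1, b2, b3, b4, b5, ch32, ch42, ch43, ch62, ch63, ch64, ch65, ch82, ch83, ch84, ch85, ch86, ch87, zero_add, Nat.cast_one, Nat.cast_ofNat, Nat.reduceSub, Nat.reduceAdd]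
  simp only [map_add, map_mul, map_neg, map_ofNat, map_pow, map_one]
  ring

lemma S_sh4 (t : k) (c : ℕ → k) : S 1 0 t 1 (nf 4 c) = nf 4 (sh t c) := by
  simp only [nf, map_sum, map_mul, map_pow]
  have hC : ∀ a : k, S 1 0 t 1 (C a) = C a := fun a => by simp [S]
  have h0 : S 1 0 t 1 (X 0) = X 0 := by simp [S]
  have h1 : S 1 0 t 1 (X 1) = C t * X 0 + X 1 := by simp [S]
  simp only [hC, h0, h1]
  simp only [sh, Finset.sum_range_succ, Finset.sum_range_zero, Nat.choose_self, Nat.choose_zero_right, Nat.choose_one_right, ch32, ch42, ch43, zero_add, Nat.cast_one, Nat.cast_ofNat, Nat.reduceSub, Nat.reduceAdd]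
  simp only [map_add, map_mul, map_neg, map_ofNat, map_pow, map_one]
  ring

/-- effect of a substitution on coefficient vectors -/
lemma step (hk : CharOK k) (α β γ δ : k) (h : α * δ - β * γ = 1) (c : ℕ → k) (hJ : JZ (nf 8 c)) :
    ∃ d, S α β γ δ (nf 8 c) = nf 8 d ∧ JZ (nf 8 d) ∧ (R5 (nf 8 d) → R5 (nf 8 c)) ∧
      S α β γ δ (nf 4 (Kf c)) = nf 4 (Kf d) ∧ S α β γ δ (nf 4 (Hf (Kf c))) = nf 4 (Hf (Kf d)) := by
  obtain ⟨d, hd⟩ := S_nf α β γ δ 8 (fac8 hk) c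
  have e1 : S α β γ δ (nf 4 (Kf c)) = nf 4 (Kf d) := by
    rw [← Kt hk, ← Kt hk, ← trans_S _ _ _ _ h, hd]
  refine ⟨d, hd, ?_, ?_, e1, ?_⟩
  · rw [← hd]; exact JZ_S _ _ _ _ h _ hJ
  · rw [← hd]; exact R5_S' _ _ _ _ h _
  · rw [← Ht hk, ← Ht hk, ← trans_S _ _ _ _ h, e1]

lemma shift_step (hk : CharOK k) (t : k) (c : ℕ → k) (hJ : JZ (nf 8 c)) :
    JZ (nf 8 (sh t c)) ∧ (R5 (nf 8 (sh t c)) → R5 (nf 8 c)) ∧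
      ∀ i ≤ 4, Kf (sh t c) i = sh t (Kf c) i := by
  have h : (1 : k) * 1 - 0 * t = 1 := by ring
  refine ⟨?_, ?_, ?_⟩
  · rw [← S_sh8]; exact JZ_S _ _ _ _ h _ hJ
  · rw [← S_sh8]; exact R5_S' _ _ _ _ h _
  · apply nf_inj 4 (fac4 hk)
    rw [← Kt hk, ← S_sh8, ← S_sh4, ← Kt hk, trans_S _ _ _ _ h]

lemma JZ_nf (hk : CharOK k) (c : ℕ → k) : JZ (nf 8 c) ↔
  (c 8 * c 0 - 8 * c 7 * c 1 + 28 * c 6 * c 2 - 56 * c 5 * c 3 + 70 * c 4 * c 4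
      - 56 * c 3 * c 5 + 28 * c 2 * c 6 - 8 * c 1 * c 7 + c 0 * c 8 = 0 ∧
   c 8 * Gf c 0 - 8 * c 7 * Gf c 1 + 28 * c 6 * Gf c 2 - 56 * c 5 * Gf c 3 + 70 * c 4 * Gf c 4
      - 56 * c 3 * Gf c 5 + 28 * c 2 * Gf c 6 - 8 * c 1 * Gf c 7 + c 0 * Gf c 8 = 0 ∧
   Kf c 4 * Kf c 0 - 4 * Kf c 3 * Kf c 1 + 6 * Kf c 2 * Kf c 2 - 4 * Kf c 1 * Kf c 3 + Kf c 0 * Kf c 4 = 0 ∧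
   Mf c (Kf c) 4 * Kf c 0 - 4 * Mf c (Kf c) 3 * Kf c 1 + 6 * Mf c (Kf c) 2 * Kf c 2
     - 4 * Mf c (Kf c) 1 * Kf c 3 + Mf c (Kf c) 0 * Kf c 4 = 0 ∧
   Kf c 4 * Hf (Kf c) 0 - 4 * Kf c 3 * Hf (Kf c) 1 + 6 * Kf c 2 * Hf (Kf c) 2
     - 4 * Kf c 1 * Hf (Kf c) 3 + Kf c 0 * Hf (Kf c) 4 = 0 ∧
   Mf c (Kf c) 4 * Hf (Kf c) 0 - 4 * Mf c (Kf c) 3 * Hf (Kf c) 1 + 6 * Mf c (Kf c) 2 * Hf (Kf c) 2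
     - 4 * Mf c (Kf c) 1 * Hf (Kf c) 3 + Mf c (Kf c) 0 * Hf (Kf c) 4 = 0 ∧
   Mf (Gf c) (Kf c) 4 * Hf (Kf c) 0 - 4 * Mf (Gf c) (Kf c) 3 * Hf (Kf c) 1
     + 6 * Mf (Gf c) (Kf c) 2 * Hf (Kf c) 2
     - 4 * Mf (Gf c) (Kf c) 1 * Hf (Kf c) 3 + Mf (Gf c) (Kf c) 0 * Hf (Kf c) 4 = 0) := by
  unfold JZ
  simp only [Kt hk, Gt hk, Ht hk, Mt hk, Q44 hk, Q88 hk]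

lemma forward_nf (hk : CharOK k) (c : ℕ → k) (h0 : c 0 = 0) (h1 : c 1 = 0) (h2 : c 2 = 0)
    (h3 : c 3 = 0) (h4 : c 4 = 0) : JZ (nf 8 c) := by
  rw [JZ_nf hk]
  simp [Gf, Kf, Hf, Mf, h0, h1, h2, h3, h4]

lemma forward (hk : CharOK k) (c : ℕ → k) (h : R5 (nf 8 c)) : JZ (nf 8 c) := by
  obtain ⟨x, y, hne, hd⟩ := h
  obtain ⟨α, γ, hdet⟩ := exists_SL x y hne
  obtain ⟨d, hS⟩ := S_nf α x γ y 8 (fac8 hk) c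
  apply JZ_S' α x γ y hdet
  rw [hS]
  have hd' := map_dvd (S α x γ y) hd
  rw [hS] at hd'
  have e : S α x γ y ((C y * X 0 - C x * X 1) ^ 5) = X 0 ^ 5 := by
    rw [map_pow]; congr 1
    have h' := congrArg (C : k → PP k) hdet
    simp only [C_sub, C_mul, C_1] at h'
    simp [S]
    linear_combination X 0 * h'
  rw [e] at hd'
  obtain ⟨q, hq⟩ := hd'
  have key : ∀ i < 5, d i = 0 := by
    intro i hi
    have := coeff_nf 8 i (by omega) d
    rw [hq, X_pow_eq_monomial, coeff_monomial_mul', if_neg] at this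
    · exact (mul_eq_zero.1 this.symm).resolve_left (choose_ne 8 i (by omega) (fac8 hk))
    · intro hle
      have := hle 0
      simp at this
      omega
  exact forward_nf hk d (key 0 (by omega)) (key 1 (by omega)) (key 2 (by omega)) (key 3 (by omega))
    (key 4 (by omega))

/-! ### the converse -/
lemma R5_low (c : ℕ → k) (h0 : c 0 = 0) (h1 : c 1 = 0) (h2 : c 2 = 0)
    (h3 : c 3 = 0) (h4 : c 4 = 0) : R5 (nf 8 c) := by
  refine ⟨0, 1, by simp, ?_⟩
  simp only [nf, Finset.sum_range_succ, Finset.sum_range_zero, h0, h1, h2, h3, h4, mul_zero, map_zero,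
    zero_mul, zero_add, map_one, one_mul, sub_zero]
  refine ⟨C ((Nat.choose 8 5 : k) * c 5) * X 1 ^ (8 - 5) + C ((Nat.choose 8 6 : k) * c 6) * X 0 * X 1 ^ (8 - 6)
    + C ((Nat.choose 8 7 : k) * c 7) * X 0 ^ 2 * X 1 ^ (8 - 7)
    + C ((Nat.choose 8 8 : k) * c 8) * X 0 ^ 3 * X 1 ^ (8 - 8), ?_⟩
  ring

lemma N2 (hk : CharOK k) (c : ℕ → k) (hJ : JZ (nf 8 c)) (h0 : c 0 = 0) (h1 : c 1 = 0)
    (h2 : c 2 ≠ 0) (h3 : c 3 = 0) (k0 : Kf c 0 = 0) (k1 : Kf c 1 = 0) (k2 : Kf c 2 = 0)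
    (k3 : Kf c 3 = 0) : R5 (nf 8 c) := by
  obtain ⟨p2, p3, p5, p7⟩ := cok2 hk
  have p35 : (35 : k) ≠ 0 := by
    rw [show (35 : k) = 5 * 7 by norm_num]; exact mul_ne_zero p5 p7
  have h4 : c 4 = 0 := by
    simp only [Kf, h0, h1, h3] at k0
    have : (2 * 3 * 5 * c 2) * c 4 = 0 := by linear_combination k0
    simpa [p2, p3, p5, h2] using this
  have h5 : c 5 = 0 := by
    simp only [Kf, h0, h1, h3] at k1
    have : (3 ^ 2 * c 2) * c 5 = 0 := by linear_combination k1
    simpa [p2, p3, p5, h2] using this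
  have h6 : c 6 = 0 := by
    simp only [Kf, h0, h1, h3, h4] at k2
    field_simp at k2
    have : (2 ^ 3 * c 2) * c 6 = 0 := by linear_combination -k2
    simpa [p2, p3, p5, h2] using this
  have h7 : c 7 = 0 := by
    simp only [Kf, h0, h1, h3, h4] at k3
    have : (5 * c 2) * c 7 = 0 := by linear_combination -k3
    simpa [p2, p3, p5, h2] using this
  have h8 : c 8 = 0 := by
    have j3 := ((JZ_nf hk c).1 hJ).2.1
    simp only [Gf, h0, h1, h3, h4, h5, h6, h7] at j3
    field_simp at j3
    have : (2 * 3 ^ 2 * 5 * 7 ^ 2 * c 2 ^ 2) * c 8 = 0 := by linear_combination j3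
    simpa [p2, p3, p5, p7, h2] using this
  refine ⟨1, 0, by simp, ?_⟩
  simp only [nf, Finset.sum_range_succ, Finset.sum_range_zero, h0, h1, h3, h4, h5, h6, h7, h8, mul_zero,
    map_zero, zero_mul, zero_add, add_zero, map_one, one_mul, zero_sub]
  refine ⟨- C ((Nat.choose 8 2 : k) * c 2) * X 0 ^ 2 * X 1, ?_⟩
  simp only [Nat.reduceSub]
  ring

lemma N1 (hk : CharOK k) (c : ℕ → k) (hJ : JZ (nf 8 c)) (h0 : c 0 = 0) (h1 : c 1 ≠ 0)
    (h2 : c 2 = 0) (k0 : Kf c 0 = 0) (k1 : Kf c 1 = 0) (k2 : Kf c 2 = 0)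
    (k3 : Kf c 3 = 0) : R5 (nf 8 c) := by
  obtain ⟨p2, p3, p5, p7⟩ := cok2 hk
  have hx : ∀ i, ∃ x, c i = c 1 * x := fun i => ⟨c i / c 1, by field_simp⟩
  obtain ⟨u, hu⟩ := hx 3
  obtain ⟨v, hv⟩ := hx 4
  obtain ⟨x5, h5⟩ := hx 5
  obtain ⟨x6, h6⟩ := hx 6
  obtain ⟨x7, h7⟩ := hx 7
  obtain ⟨x8, h8⟩ := hx 8
  have canc : ∀ z : k, c 1 ^ 2 * z = 0 → z = 0 := fun z hz => by simpa [h1] using hz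
  have j2 := ((JZ_nf hk c).1 hJ).1
  simp only [Kf, h0, h2, hu, hv, h5, h6, h7, h8] at k0 k1 k2 k3 j2
  rw [div_eq_zero_iff, or_iff_left p3] at k2
  have e0 : 3 * x5 + 5 * u ^ 2 = 0 := by
    have : c 1 ^ 2 * (2 ^ 2 * (3 * x5 + 5 * u ^ 2)) = 0 := by linear_combination -k0
    simpa [p2] using canc _ this
  have e1 : x6 + u * v = 0 := by
    have : c 1 ^ 2 * (5 * (x6 + u * v)) = 0 := by linear_combination -k1
    simpa [p5] using canc _ this
  have e2 : -2 * x7 + 34 * u * x5 - 25 * v ^ 2 = 0 := by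
    apply canc; linear_combination k2
  have e3 : x8 + 9 * u * x6 - 5 * v * x5 = 0 := by
    apply canc; linear_combination k3
  have ej : -16 * x7 - 112 * u * x5 + 70 * v ^ 2 = 0 := by
    apply canc; linear_combination j2
  have ed : 64 * u ^ 3 + 27 * v ^ 2 = 0 := by
    have : (2 * 5) * (64 * u ^ 3 + 27 * v ^ 2) = 0 := by
      linear_combination ej - 8 * e2 + 128 * u * e0
    simpa [p2, p5] using this
  obtain ⟨t, ht1, ht2⟩ : ∃ t : k, u = -3 * t ^ 2 ∧ v = 8 * t ^ 3 := by
    by_cases hu0 : u = 0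
    · refine ⟨0, by simp [hu0], ?_⟩
      have : (3 ^ 3) * v ^ 2 = 0 := by rw [hu0] at ed; linear_combination ed
      simpa [p3] using this
    · have p8 : (8 : k) ≠ 0 := by
        rw [show (8 : k) = 2 ^ 3 by norm_num]; exact pow_ne_zero _ p2
      refine ⟨-3 * v / (8 * u), ?_, ?_⟩
      · field_simp
        linear_combination ed
      · field_simp
        linear_combination v * ed
  subst ht1 ht2
  have f5 : x5 = -15 * t ^ 4 := by
    apply mul_left_cancel₀ p3; linear_combination e0
  have f6 : x6 = 24 * t ^ 5 := by linear_combination e1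
  have f7 : x7 = -35 * t ^ 6 := by
    apply mul_left_cancel₀ p2; rw [f5] at e2; linear_combination -e2
  have f8 : x8 = 48 * t ^ 7 := by
    rw [f5, f6] at e3; linear_combination e3
  refine ⟨1, t, by simp, ?_⟩
  simp only [nf, Finset.sum_range_succ, Finset.sum_range_zero, h0, h2, hu, hv, h5, h6, h7, h8, f5, f6, f7, f8,
    Nat.choose_self, Nat.choose_one_right, ch82, ch83, ch84, ch85, ch86, ch87, zero_add, Nat.cast_one,
    Nat.cast_ofNat, Nat.reduceSub, Nat.reduceAdd, map_add, map_mul, map_neg, map_ofNat, map_pow, map_one,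
    map_zero, mul_zero, zero_mul]
  refine ⟨-(8 * C (c 1) * X 0 * (X 1 - C t * X 0) * (X 1 + 6 * C t * X 0)), ?_⟩
  ring

lemma sh0 (t : k) (c : ℕ → k) : sh t c 0 = c 0 := by simp [sh]
lemma sh1 (t : k) (c : ℕ → k) : sh t c 1 = c 1 + t * c 0 := by simp [sh, Finset.sum_range_succ]
lemma sh2 (t : k) (c : ℕ → k) : sh t c 2 = c 2 + 2 * t * c 1 + t ^ 2 * c 0 := by
  simp [sh, Finset.sum_range_succ]
lemma sh3 (t : k) (c : ℕ → k) : sh t c 3 = c 3 + 3 * t * c 2 + 3 * t ^ 2 * c 1 + t ^ 3 * c 0 := by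
  simp [sh, Finset.sum_range_succ, ch32]
lemma sh4 (t : k) (c : ℕ → k) : sh t c 4 = c 4 + 4 * t * c 3 + 6 * t ^ 2 * c 2 + 4 * t ^ 3 * c 1 + t ^ 4 * c 0 := by
  simp [sh, Finset.sum_range_succ, ch42, ch43]

lemma finA (hk : CharOK k) (c : ℕ → k) (hJ : JZ (nf 8 c)) (h0 : c 0 = 0)
    (k0 : Kf c 0 = 0) (k1 : Kf c 1 = 0) (k2 : Kf c 2 = 0) (k3 : Kf c 3 = 0) : R5 (nf 8 c) := by
  obtain ⟨p2, p3, p5, p7⟩ := cok2 hk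
  by_cases h1 : c 1 = 0
  · by_cases h2 : c 2 = 0
    · have h3 : c 3 = 0 := by
        simp only [Kf, h0, h1, h2] at k0
        have : (2 ^ 2 * 5) * c 3 ^ 2 = 0 := by linear_combination -k0
        simpa [p2, p5] using this
      have h4 : c 4 = 0 := by
        simp only [Kf, h0, h1, h2, h3] at k2
        rw [div_eq_zero_iff, or_iff_left p3] at k2
        have : (5 ^ 2) * c 4 ^ 2 = 0 := by linear_combination -k2
        simpa [p2, p5] using this
      exact R5_low c h0 h1 h2 h3 h4
    · obtain ⟨q1, q2, q3⟩ := shift_step hk (-c 3 / (3 * c 2)) c hJ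
      apply q2
      apply N2 hk _ q1
      · rw [sh0, h0]
      · rw [sh1, h0, h1]; ring
      · rw [sh2, h0, h1]; simpa using h2
      · rw [sh3, h0, h1]; field_simp; ring
      · rw [q3 _ (by norm_num), sh0, k0]
      · rw [q3 _ (by norm_num), sh1, k0, k1]; ring
      · rw [q3 _ (by norm_num), sh2, k0, k1, k2]; ring
      · rw [q3 _ (by norm_num), sh3, k0, k1, k2, k3]; ring
  · obtain ⟨q1, q2, q3⟩ := shift_step hk (-c 2 / (2 * c 1)) c hJ
    apply q2
    apply N1 hk _ q1
    · rw [sh0, h0]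
    · rw [sh1, h0]; simpa using h1
    · rw [sh2, h0]; field_simp; ring
    · rw [q3 _ (by norm_num), sh0, k0]
    · rw [q3 _ (by norm_num), sh1, k0, k1]; ring
    · rw [q3 _ (by norm_num), sh2, k0, k1, k2]; ring
    · rw [q3 _ (by norm_num), sh3, k0, k1, k2, k3]; ring

lemma N3 (hk : CharOK k) (c : ℕ → k) (hJ : JZ (nf 8 c)) (k0 : Kf c 0 = 0) (k1 : Kf c 1 = 0)
    (k2 : Kf c 2 = 0) (k4 : Kf c 4 = 0) : Kf c 3 = 0 := by
  obtain ⟨p2, p3, p5, p7⟩ := cok2 hk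
  have p35 : (35 : k) ≠ 0 := by
    rw [show (35 : k) = 5 * 7 by norm_num]; exact mul_ne_zero p5 p7
  by_contra k3
  obtain ⟨j2, j3, -, j5, -, j7, j8⟩ := (JZ_nf hk c).1 hJ
  simp only [Hf, Mf, k0, k1, k2, k4, Nat.reduceAdd, mul_zero, zero_mul, add_zero, zero_add, sub_zero,
    zero_sub, zero_div] at j5 j7 j8
  have h1 : c 1 = 0 := by
    have : (2 ^ 3 * Kf c 3 ^ 3) * c 1 = 0 := by linear_combination j7
    simpa [p2, k3] using this
  have h2 : c 2 = 0 := by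
    have : (2 ^ 4 * Kf c 3 ^ 2) * c 2 = 0 := by linear_combination j5
    simpa [p2, k3] using this
  have h05 : c 0 * c 5 = 0 := by
    have : (2 ^ 3 * Kf c 3 ^ 3) * Gf c 1 = 0 := by linear_combination j8
    have : Gf c 1 = 0 := by simpa [p2, k3] using this
    simp only [Gf, h1, h2] at this
    linear_combination this
  simp only [Kf, Gf, h1, h2] at k0 k1 k2 k3 k4 j2 j3
  rw [div_eq_zero_iff, or_iff_left p3] at k2
  by_cases h0 : c 0 = 0
  · have h3 : c 3 = 0 := by
      have : (2 ^ 2 * 5) * c 3 ^ 2 = 0 := by rw [h0] at k0; linear_combination -k0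
      simpa [p2, p5] using this
    have h4 : c 4 = 0 := by
      have : (5 ^ 2) * c 4 ^ 2 = 0 := by rw [h0, h3] at k2; linear_combination -k2
      simpa [p5] using this
    apply k3; rw [h3, h4]; ring
  · have h5 : c 5 = 0 := by simpa [h0] using h05
    rw [h5] at k2 j2 j3 k3
    have h4 : c 4 = 0 := by
      have : (2 ^ 3 * 3 * 5) * c 4 ^ 2 = 0 := by linear_combination j2 - 2 * k2
      simpa [p2, p3, p5] using this
    rw [h4] at k1 k2 j3 k3
    have h8 : c 8 = 0 := by
      have : c 0 * c 8 = 0 := by linear_combination k2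
      simpa [h0] using this
    have h7 : c 7 = 0 := by
      have : c 0 * c 7 = 0 := by linear_combination k1
      simpa [h0] using this
    rw [h7, h8] at j3
    field_simp at j3
    have e : (2 ^ 2 * 3 ^ 4 * 5 * 7 ^ 2) * (c 3 ^ 2 * c 6) = 0 := by linear_combination j3 - 245 * 9 * c 6 * k0
    have e' : c 3 ^ 2 * c 6 = 0 := by simpa [p2, p3, p5, p7] using e
    apply k3
    rcases mul_eq_zero.1 e' with h | h
    · rw [pow_eq_zero_iff two_ne_zero] at h
      rw [h]; ring
    · rw [h]; ring

section conv
variable [IsAlgClosed k]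

lemma caseZ (hk : CharOK k) (c : ℕ → k) (hJ : JZ (nf 8 c)) (h : ∀ i ≤ 4, Kf c i = 0) : R5 (nf 8 c) := by
  obtain ⟨x, y, hne, hz⟩ := exists_zero 8 (by norm_num) c
  obtain ⟨α, γ, hdet⟩ := exists_SL x y hne
  obtain ⟨d, hd, dJ, dR, dK, -⟩ := step hk α x γ y hdet c hJ
  apply dR
  have d0 : d 0 = 0 := by rw [← eval_nf 8 d, ← hd, eval_S, hz]
  have hn : nf 4 (Kf c) = nf 4 (fun _ => 0) := by
    refine Finset.sum_congr rfl fun i hi => ?_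
    rw [h i (by simp at hi; omega)]
  have hn0 : nf 4 (fun _ => (0 : k)) = 0 := by simp [nf]
  have hz' : ∀ i ≤ 4, Kf d i = 0 := by
    apply nf_inj 4 (fac4 hk) (Kf d) (fun _ => 0)
    rw [← dK, hn, hn0, map_zero]
  exact finA hk d dJ d0 (hz' 0 (by norm_num)) (hz' 1 (by norm_num)) (hz' 2 (by norm_num)) (hz' 3 (by norm_num))

lemma caseX (hk : CharOK k) (c : ℕ → k) (hJ : JZ (nf 8 c)) (k0 : Kf c 0 = 0) (k1 : Kf c 1 = 0)
    (k2 : Kf c 2 = 0) (k3 : Kf c 3 = 0) : R5 (nf 8 c) := by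
  by_cases k4 : Kf c 4 = 0
  · apply caseZ hk c hJ
    intro i hi
    interval_cases i <;> assumption
  · refine finA hk c hJ ?_ k0 k1 k2 k3
    obtain ⟨-, -, -, j5, -⟩ := (JZ_nf hk c).1 hJ
    simpa [Mf, k0, k1, k2, k3, k4] using j5

lemma caseH (hk : CharOK k) (c : ℕ → k) (hJ : JZ (nf 8 c)) (h : ∀ i ≤ 4, Hf (Kf c) i = 0) :
    R5 (nf 8 c) := by
  obtain ⟨p2, p3, p5, p7⟩ := cok2 hk
  obtain ⟨x, y, hne, hz⟩ := exists_zero 4 (by norm_num) (Kf c)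
  obtain ⟨α, γ, hdet⟩ := exists_SL x y hne
  obtain ⟨d, hd, dJ, dR, dK, dH⟩ := step hk α x γ y hdet c hJ
  apply dR
  have d0 : Kf d 0 = 0 := by rw [← eval_nf 4 (Kf d), ← dK, eval_S, hz]
  have hn : nf 4 (Hf (Kf c)) = nf 4 (fun _ => 0) := by
    refine Finset.sum_congr rfl fun i hi => ?_
    rw [h i (by simp at hi; omega)]
  have hn0 : nf 4 (fun _ => (0 : k)) = 0 := by simp [nf]
  have hz' : ∀ i ≤ 4, Hf (Kf d) i = 0 := by
    apply nf_inj 4 (fac4 hk) (Hf (Kf d)) (fun _ => 0)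
    rw [← dH, hn, hn0, map_zero]
  have e0 := hz' 0 (by norm_num)
  have e4 := hz' 4 (by norm_num)
  obtain ⟨-, -, j4, -⟩ := (JZ_nf hk d).1 dJ
  simp only [Hf, d0] at e0 e4
  have d1 : Kf d 1 = 0 := by
    have : 2 * Kf d 1 ^ 2 = 0 := by linear_combination -e0
    simpa [p2] using this
  have d2 : Kf d 2 = 0 := by
    have : 2 * 3 * Kf d 2 ^ 2 = 0 := by rw [d0, d1] at j4; linear_combination j4
    simpa [p2, p3] using this
  have d3 : Kf d 3 = 0 := by
    have : 2 * Kf d 3 ^ 2 = 0 := by rw [d2] at e4; linear_combination -e4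
    simpa [p2] using this
  exact caseX hk d dJ d0 d1 d2 d3

lemma backward (hk : CharOK k) (c : ℕ → k) (hJ : JZ (nf 8 c)) : R5 (nf 8 c) := by
  obtain ⟨p2, p3, p5, p7⟩ := cok2 hk
  obtain ⟨x, y, hne, hz⟩ := exists_zero 4 (by norm_num) (Hf (Kf c))
  obtain ⟨α, γ, hdet⟩ := exists_SL x y hne
  obtain ⟨d, hd, dJ, dR, dK, dH⟩ := step hk α x γ y hdet c hJ
  apply dR
  have e0 : Hf (Kf d) 0 = 0 := by rw [← eval_nf 4 (Hf (Kf d)), ← dH, eval_S, hz]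
  obtain ⟨-, -, j4, -, j6, -⟩ := (JZ_nf hk d).1 dJ
  simp only [Hf] at e0
  have e0' : Kf d 0 * Kf d 2 = Kf d 1 ^ 2 := by
    apply mul_left_cancel₀ p2; linear_combination e0
  have i0 : Kf d 0 * Kf d 4 - 4 * Kf d 1 * Kf d 3 + 3 * Kf d 2 ^ 2 = 0 := by
    have : 2 * (Kf d 0 * Kf d 4 - 4 * Kf d 1 * Kf d 3 + 3 * Kf d 2 ^ 2) = 0 := by linear_combination j4
    simpa [p2] using this
  by_cases d0 : Kf d 0 = 0
  · have d1 : Kf d 1 = 0 := by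
      rw [d0, zero_mul] at e0'
      simpa using e0'.symm
    have d2 : Kf d 2 = 0 := by
      have : 3 * Kf d 2 ^ 2 = 0 := by rw [d0, d1] at i0; linear_combination i0
      simpa [p3] using this
    by_cases d3 : Kf d 3 = 0
    · exact caseX hk d dJ d0 d1 d2 d3
    · exfalso
      obtain ⟨q1, q2, q3⟩ := shift_step hk (-Kf d 4 / (2 ^ 2 * Kf d 3)) d dJ
      have := N3 hk _ q1 ?_ ?_ ?_ ?_
      · rw [q3 _ (by norm_num), sh3, d0, d1, d2] at this
        apply d3; simpa using this
      · rw [q3 _ (by norm_num), sh0, d0]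
      · rw [q3 _ (by norm_num), sh1, d0, d1]; ring
      · rw [q3 _ (by norm_num), sh2, d0, d1, d2]; ring
      · rw [q3 _ (by norm_num), sh4, d0, d1, d2]; field_simp; ring
  · apply caseH hk d dJ
    simp only [Hf] at j6
    generalize Kf d = K at *
    have hx : ∀ i, ∃ x, K i = K 0 * x := fun i => ⟨K i / K 0, by field_simp⟩
    obtain ⟨a, h1⟩ := hx 1
    obtain ⟨b, h2⟩ := hx 2
    obtain ⟨e, h3⟩ := hx 3
    obtain ⟨f, h4⟩ := hx 4
    simp only [h1, h2, h3, h4] at e0' i0 j6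
    have hb : b = a ^ 2 := by
      apply mul_left_cancel₀ (pow_ne_zero 2 d0); linear_combination e0'
    subst hb
    have hf : f = 4 * a * e - 3 * a ^ 4 := by
      apply mul_left_cancel₀ (pow_ne_zero 2 d0); linear_combination i0
    subst hf
    have he : e = a ^ 3 := by
      have hi : (3 : k) * 3⁻¹ = 1 := mul_inv_cancel₀ p3
      have : (2 * 3 * K 0 ^ 3) * (e - a ^ 3) ^ 2 = 0 := by
        linear_combination -j6 + 2 * (K 0 * a ^ 2) * (K 0 ^ 2 * (6 * a * (e - a ^ 3))) * hi
      have : e - a ^ 3 = 0 := by simpa [p2, p3, d0] using this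
      linear_combination this
    subst he
    intro i hi
    interval_cases i <;> simp only [Hf, h1, h2, h3, h4] <;> ring

end conv

lemma hom_oct {k : Type*} [Field k] (a : Fin 9 → k) : (octForm a).IsHomogeneous 8 := by
  refine IsHomogeneous.sum _ _ _ fun i hi => ?_
  have := ((isHomogeneous_C (Fin 2) (a i)).mul ((isHomogeneous_X k (0 : Fin 2)).pow (i : ℕ))).mul
    ((isHomogeneous_X k (1 : Fin 2)).pow (8 - (i : ℕ)))
  convert this using 1
  omega

/-- A nonzero binary octavic over an algebraically closed field of characteristic
∉ {2,3,5,7} has a root of multiplicity at least 5 if and only if `J_i = 0` for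
`i = 2, ..., 8`. -/
theorem hasRootOfMultFive_iff_J_eq_zero (k : Type*) [Field k] [IsAlgClosed k] (hk : CharOK k)
    (a : Fin 9 → k) (ha : octForm a ≠ 0) :
    (∃ x0 y0 : k, ¬(x0 = 0 ∧ y0 = 0) ∧ (C y0 * X 0 - C x0 * X 1) ^ 5 ∣ octForm a) ↔
      (J2 a = 0 ∧ J3 a = 0 ∧ J4 a = 0 ∧ J5 a = 0 ∧ J6 a = 0 ∧ J7 a = 0 ∧ J8 a = 0) := by
 
  rw [JZ_iff hk a]
  obtain ⟨c, hc⟩ := exists_nf 8 (fac8 hk) (octForm a) (hom_oct a)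
  rw [hc]
  exact ⟨fun h => forward hk c h, fun h => backward hk c h⟩
end
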